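/- Let ū_ε be the unique radially symmetric solution of the Dirichlet problem, and define F(s, r) = ε⁻²·(exp(s) − r²·exp(−s)), so that F₁(s,r) = ε⁻²·(exp(s) + r²·exp(−s)) and F₂(s,r) = −2r·ε⁻²·exp(−s) are its partial derivatives. Then for all 0 < r < 1: 0 < F(ū_ε(r), r) < ε⁻², 0 < F₁(ū_ε(r), r) < 2ε⁻², and −2ε⁻² < F₂(ū_ε(r), r) < 0. -/

import Mathlib

open Real Set Metric

/-- The Euclidean Laplacian of `u : ℝ² → ℝ`. -/
noncomputable def laplacian2 (u : EuclideanSpace ℝ (Fin 2) → ℝ)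
    (x : EuclideanSpace ℝ (Fin 2)) : ℝ :=
  ∑ i : Fin 2,
    fderiv ℝ (fun y => fderiv ℝ u y (EuclideanSpace.single i 1)) x (EuclideanSpace.single i 1)

/-- `u` is a solution of the Dirichlet problem
`Δu = ε⁻²·(exp u − |x|²·exp (−u))` in `B₁(0)`, `u = 0` on `∂B₁(0)`. -/
def IsDirichletSol (ε : ℝ) (u : EuclideanSpace ℝ (Fin 2) → ℝ) : Prop :=
  ContinuousOn u (closedBall 0 1) ∧
  ContDiffOn ℝ (⊤ : ℕ∞) u (ball 0 1) ∧
  (∀ x ∈ ball (0 : EuclideanSpace ℝ (Fin 2)) 1,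
    laplacian2 u x = (ε ^ 2)⁻¹ * (Real.exp (u x) - ‖x‖ ^ 2 * Real.exp (-u x))) ∧
  (∀ x ∈ sphere (0 : EuclideanSpace ℝ (Fin 2)) 1, u x = 0)

/-!
All six bounds follow from `log ‖x‖ < u x ≤ 0`. The upper bound is the comparison principle
against the constant `0`. For the lower bound, the right-hand side vanishes exactly at
`u = log ‖x‖`, and `log ‖x‖` is subharmonic away from the origin in dimension at least two, so
`v = u - log ‖x‖` satisfies `Δ v ≤ 2 c max(v, 0)` there. Near the origin `v` is positive because
`u` is bounded, and `v = 0` on the unit sphere; comparing `v` with a small multiple of the barrier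
`‖x‖⁻ᵖ - 1` on an annulus, with `p` so large that the barrier is a strict subsolution, gives
`v > 0`.
-/

open Filter InnerProductSpace Module
open scoped Topology Laplacian

section SecondDerivative

theorem iteratedDeriv_two_nonneg_of_isLocalMin {f : ℝ → ℝ} {a : ℝ} (hf : ContinuousAt f a)
    (hmin : IsLocalMin f a) : 0 ≤ iteratedDeriv 2 f a := by
  rw [iteratedDeriv_succ, iteratedDeriv_one]
  by_contra! hneg
  have hmax : IsLocalMax f a := isLocalMax_of_deriv_deriv_neg hneg hmin.deriv_eq_zero hf
  have hconst : f =ᶠ[𝓝 a] fun _ => f a := by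
    filter_upwards [hmin, hmax] with t ht ht' using le_antisymm ht' ht
  have hzero : deriv (deriv f) a = 0 := by
    rw [hconst.deriv.deriv_eq]
    simp
  exact hneg.ne hzero

variable {E F : Type*} [NormedAddCommGroup E] [NormedSpace ℝ E]
  [NormedAddCommGroup F] [NormedSpace ℝ F]

theorem iteratedDeriv_two_comp_add_smul {f : E → F} {x : E} (hf : ContDiffAt ℝ 2 f x) (e : E) :
    iteratedDeriv 2 (fun t : ℝ => f (x + t • e)) 0 = iteratedFDeriv ℝ 2 f x ![e, e] := by
  have hderiv : deriv (fun t : ℝ => x + t • e) = fun _ => e := by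
    ext t
    simpa using (((hasDerivAt_id t).smul_const e).const_add x).deriv
  have hderiv₂ : iteratedDeriv 2 (fun t : ℝ => x + t • e) 0 = 0 := by
    rw [iteratedDeriv_succ', hderiv]
    simp
  have hf₀ : ContDiffAt ℝ 2 f (x + (0 : ℝ) • e) := by simpa
  have hcomp := iteratedDeriv_vcomp_two hf₀
    (show ContDiffAt ℝ 2 (fun t : ℝ => x + t • e) 0 by fun_prop)
  have hvec : ![e, e] = fun _ => e := by
    ext i
    fin_cases i <;> rfl
  rw [hderiv, hderiv₂, map_zero, add_zero, zero_smul, add_zero] at hcomp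
  rw [hvec]
  exact hcomp

end SecondDerivative

section Laplacian

variable {E : Type*} [NormedAddCommGroup E] [InnerProductSpace ℝ E]

theorem iteratedDeriv_two_comp_norm_add_smul_sq {h : ℝ → ℝ} {x e : E} (he : ‖e‖ = 1)
    (hh : ContDiffAt ℝ 2 h (‖x‖ ^ 2)) :
    iteratedDeriv 2 (fun t : ℝ => h (‖x + t • e‖ ^ 2)) 0 =
      4 * inner ℝ e x ^ 2 * iteratedDeriv 2 h (‖x‖ ^ 2) + 2 * deriv h (‖x‖ ^ 2) := by
  set q : ℝ → ℝ := fun t => ‖x‖ ^ 2 + 2 * inner ℝ e x * t + t ^ 2 with hq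
  have hnorm (t : ℝ) : ‖x + t • e‖ ^ 2 = q t := by
    rw [norm_add_sq_real, norm_smul, inner_smul_right, he, real_inner_comm, mul_one,
      Real.norm_eq_abs, sq_abs]
    ring
  have hq₀ : q 0 = ‖x‖ ^ 2 := by simp [hq]
  have hderiv : deriv q = fun t => 2 * inner ℝ e x + 2 * t := by
    ext t
    simpa using ((((hasDerivAt_id t).const_mul (2 * inner ℝ e x)).const_add (‖x‖ ^ 2)).fun_add
      ((hasDerivAt_id t).fun_pow 2)).deriv
  have hderiv₂ : iteratedDeriv 2 q 0 = 2 := by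
    rw [iteratedDeriv_succ', hderiv, iteratedDeriv_one]
    simp
  have hcomp := iteratedDeriv_comp_two (f := q) (x := 0) (hq₀ ▸ hh) (by fun_prop)
  simp only [hnorm]
  rw [← Function.comp_def, hcomp, hderiv, hderiv₂, hq₀]
  ring

variable [FiniteDimensional ℝ E]

theorem laplacian_nonneg_of_isLocalMin {f : E → ℝ} {x : E} (hf : ContDiffAt ℝ 2 f x)
    (hmin : IsLocalMin f x) : 0 ≤ Δ f x := by
  rw [laplacian_eq_iteratedFDeriv_stdOrthonormalBasis]
  refine Finset.sum_nonneg fun i _ => ?_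
  set e := stdOrthonormalBasis ℝ E i
  rw [← iteratedDeriv_two_comp_add_smul hf]
  have hline : ContinuousAt (fun t : ℝ => x + t • e) 0 := by fun_prop
  have hx : x + (0 : ℝ) • e = x := by simp
  refine iteratedDeriv_two_nonneg_of_isLocalMin (hf.continuousAt.comp_of_eq hline hx) ?_
  exact IsMinFilter.comp_tendsto (f := f) (by rwa [hx]) hline.tendsto

theorem le_of_laplacian_lt {K U : Set E} (hK : IsCompact K) (hU : IsOpen U) (hUK : U ⊆ K)
    {v w : E → ℝ} (hv : ContinuousOn v K) (hw : ContinuousOn w K)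
    (hv₂ : ContDiffOn ℝ 2 v U) (hw₂ : ContDiffOn ℝ 2 w U)
    (hbdry : ∀ x ∈ K \ U, w x ≤ v x) (hlap : ∀ x ∈ U, v x < w x → Δ v x < Δ w x) :
    ∀ x ∈ K, w x ≤ v x := by
  intro x hx
  by_contra! hlt
  obtain ⟨y, hyK, hmin⟩ := hK.exists_isMinOn ⟨x, hx⟩ (hv.sub hw)
  have hy : v y < w y := by
    have : v y - w y ≤ v x - w x := hmin hx
    linarith
  have hyU : y ∈ U := by
    by_contra hyU
    exact (hbdry y ⟨hyK, hyU⟩).not_gt hy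
  have hUy : U ∈ 𝓝 y := hU.mem_nhds hyU
  have hlocal : IsLocalMin (v - w) y := hmin.isLocalMin (mem_of_superset hUy hUK)
  have hnonneg : 0 ≤ Δ (v - w) y :=
    laplacian_nonneg_of_isLocalMin ((hv₂.contDiffAt hUy).sub (hw₂.contDiffAt hUy)) hlocal
  rw [(hv₂.contDiffAt hUy).laplacian_sub (hw₂.contDiffAt hUy)] at hnonneg
  linarith [hlap y hyU hy]

theorem laplacian_comp_norm_sq {h : ℝ → ℝ} {x : E} (hh : ContDiffAt ℝ 2 h (‖x‖ ^ 2)) :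
    Δ (fun y : E => h (‖y‖ ^ 2)) x =
      4 * ‖x‖ ^ 2 * iteratedDeriv 2 h (‖x‖ ^ 2) + 2 * finrank ℝ E * deriv h (‖x‖ ^ 2) := by
  have hcomp : ContDiffAt ℝ 2 (fun y : E => h (‖y‖ ^ 2)) x :=
    hh.comp x (contDiff_norm_sq ℝ).contDiffAt
  set b := stdOrthonormalBasis ℝ E
  have hdir (i) : iteratedFDeriv ℝ 2 (fun y : E => h (‖y‖ ^ 2)) x ![b i, b i] =
      4 * inner ℝ (b i) x ^ 2 * iteratedDeriv 2 h (‖x‖ ^ 2) + 2 * deriv h (‖x‖ ^ 2) := by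
    rw [← iteratedDeriv_two_comp_add_smul hcomp]
    exact iteratedDeriv_two_comp_norm_add_smul_sq (b.norm_eq_one i) hh
  rw [laplacian_eq_iteratedFDeriv_orthonormalBasis _ b]
  simp only [hdir, Finset.sum_add_distrib, ← Finset.sum_mul, ← Finset.mul_sum,
    b.sum_sq_inner_right, Finset.sum_const, Finset.card_univ, Fintype.card_fin, nsmul_eq_mul]
  ring

theorem laplacian_log_norm {x : E} (hx : x ≠ 0) :
    Δ (fun y : E => log ‖y‖) x = (finrank ℝ E - 2) / ‖x‖ ^ 2 := by
  have hs : ‖x‖ ^ 2 ≠ 0 := by simpa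
  have hlog : (fun y : E => log ‖y‖) = fun y => 2⁻¹ * log (‖y‖ ^ 2) := by
    ext y
    simp
  have hderiv : deriv (fun s => 2⁻¹ * log s) = fun s : ℝ => 2⁻¹ * s⁻¹ := by
    ext s
    simp
  rw [hlog, laplacian_comp_norm_sq (contDiffAt_const.mul (contDiffAt_log.2 hs)),
    iteratedDeriv_succ', iteratedDeriv_one, hderiv]
  simp only [deriv_const_mul_field, deriv_inv]
  field_simp
  ring

theorem laplacian_norm_rpow (p : ℝ) {x : E} (hx : x ≠ 0) :
    Δ (fun y : E => ‖y‖ ^ p) x = p * (p + finrank ℝ E - 2) * ‖x‖ ^ (p - 2) := by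
  have hs : ‖x‖ ^ 2 ≠ 0 := by simpa
  have hpow (q : ℝ) (y : E) : ‖y‖ ^ q = (‖y‖ ^ 2) ^ (q / 2) := by
    rw [← rpow_natCast_mul (norm_nonneg y)]
    congr 1
    push_cast
    ring
  have hstep : (‖x‖ ^ 2) ^ (p / 2 - 1) = ‖x‖ ^ 2 * (‖x‖ ^ 2) ^ (p / 2 - 2) := by
    rw [mul_comm, ← rpow_add_one hs]
    ring_nf
  have hderiv : deriv (fun s : ℝ => s ^ (p / 2)) (‖x‖ ^ 2) =
      p / 2 * (‖x‖ ^ 2) ^ (p / 2 - 1) := Real.deriv_rpow_const _ _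
  have hderiv₂ : iteratedDeriv 2 (fun s : ℝ => s ^ (p / 2)) (‖x‖ ^ 2) =
      p / 2 * (p / 2 - 1) * (‖x‖ ^ 2) ^ (p / 2 - 2) := by
    rw [iteratedDeriv_eq_iterate, iter_deriv_rpow_const]
    simp [descPochhammer_succ_right]
  rw [funext (hpow p), laplacian_comp_norm_sq (contDiffAt_rpow_const_of_ne hs), hderiv₂,
    hderiv, hpow (p - 2), sub_div, div_self two_ne_zero, hstep]
  ring

end Laplacian

section Annulus

variable {E : Type*} [NormedAddCommGroup E] {a b C p : ℝ} {x : E}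

/-- The radial Hopf barrier `‖x‖⁻ᵖ - b⁻ᵖ`, which is positive for `0 < ‖x‖ < b` and vanishes on the
outer sphere `‖x‖ = b`. -/
noncomputable def hopfBarrier (p b : ℝ) (x : E) : ℝ :=
  ‖x‖ ^ (-p) - b ^ (-p)

theorem hopfBarrier_pos (hp : 0 < p) (hx : x ≠ 0) (hxb : ‖x‖ < b) : 0 < hopfBarrier p b x :=
  sub_pos.2 (rpow_lt_rpow_of_neg (norm_pos_iff.2 hx) hxb (neg_lt_zero.2 hp))

variable [InnerProductSpace ℝ E]

theorem contDiffAt_hopfBarrier (hx : x ≠ 0) : ContDiffAt ℝ 2 (hopfBarrier p b : E → ℝ) x :=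
  ((contDiffAt_norm ℝ hx).rpow_const_of_ne (norm_ne_zero_iff.2 hx)).sub contDiffAt_const

variable [FiniteDimensional ℝ E]

theorem laplacian_hopfBarrier (hx : x ≠ 0) :
    Δ (hopfBarrier p b : E → ℝ) x = p * (p + 2 - finrank ℝ E) * ‖x‖ ^ (-p - 2) := by
  have hpow : ContDiffAt ℝ 2 (fun y : E => ‖y‖ ^ (-p)) x :=
    (contDiffAt_norm ℝ hx).rpow_const_of_ne (norm_ne_zero_iff.2 hx)
  have hsub : (hopfBarrier p b : E → ℝ) = (fun y => ‖y‖ ^ (-p)) - fun _ => b ^ (-p) := rfl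
  rw [hsub, hpow.laplacian_sub contDiffAt_const, laplacian_norm_rpow _ hx, laplacian_const,
    Pi.zero_apply]
  ring

theorem mul_hopfBarrier_lt_laplacian (hC : 0 ≤ C) (hp : C * b ^ 2 + finrank ℝ E + 1 ≤ p)
    (hx : x ≠ 0) (hxb : ‖x‖ ≤ b) : C * hopfBarrier p b x < Δ (hopfBarrier p b : E → ℝ) x := by
  have hnorm : 0 < ‖x‖ := norm_pos_iff.2 hx
  have hsplit : ‖x‖ ^ (-p) = ‖x‖ ^ 2 * ‖x‖ ^ (-p - 2) := by
    rw [← rpow_natCast, ← rpow_add hnorm]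
    congr 1
    push_cast
    ring
  have hp₁ : 1 ≤ p := by
    have : 0 ≤ C * b ^ 2 + finrank ℝ E := by positivity
    linarith
  have hcoeff : C * ‖x‖ ^ 2 < p * (p + 2 - finrank ℝ E) := by
    have hsq : C * ‖x‖ ^ 2 ≤ C * b ^ 2 := by gcongr
    have hfactor : C * b ^ 2 < p + 2 - finrank ℝ E := by linarith
    exact hsq.trans_lt (hfactor.trans_le
      (le_mul_of_one_le_left ((by positivity : 0 ≤ C * b ^ 2).trans hfactor.le) hp₁))
  calc
    C * hopfBarrier p b x ≤ C * ‖x‖ ^ (-p) := by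
      gcongr
      exact sub_le_self _ (rpow_nonneg (hnorm.le.trans hxb) _)
    _ = C * ‖x‖ ^ 2 * ‖x‖ ^ (-p - 2) := by rw [hsplit, mul_assoc]
    _ < p * (p + 2 - finrank ℝ E) * ‖x‖ ^ (-p - 2) := by gcongr
    _ = Δ (hopfBarrier p b : E → ℝ) x := (laplacian_hopfBarrier hx).symm

theorem smul_hopfBarrier_le (ha : 0 < a) (hC : 0 ≤ C) (hp : C * b ^ 2 + finrank ℝ E + 1 ≤ p)
    {v : E → ℝ} (hv : ContinuousOn v (norm ⁻¹' Icc a b))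
    (hv₂ : ContDiffOn ℝ 2 v (norm ⁻¹' Ioo a b))
    (hlap : ∀ x, ‖x‖ ∈ Ioo a b → Δ v x ≤ C * max (v x) 0) {δ : ℝ} (hδ : 0 < δ)
    (hinner : ∀ x, ‖x‖ = a → δ * hopfBarrier p b x ≤ v x) (houter : ∀ x, ‖x‖ = b → 0 ≤ v x) :
    ∀ x, ‖x‖ ∈ Icc a b → δ * hopfBarrier p b x ≤ v x := by
  have hK : IsCompact (norm ⁻¹' Icc a b : Set E) :=
    (isCompact_closedBall (0 : E) b).of_isClosed_subset (isClosed_Icc.preimage continuous_norm)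
      fun x hx => by simpa using hx.2
  have hp₀ : 0 < p := lt_of_lt_of_le (by positivity) hp
  have hne {x : E} (hx : a ≤ ‖x‖) : x ≠ 0 := norm_pos_iff.1 (ha.trans_le hx)
  have hsmooth {x : E} (hx : a ≤ ‖x‖) : ContDiffAt ℝ 2 (δ • hopfBarrier p b) x :=
    (contDiffAt_hopfBarrier (hne hx)).const_smul δ
  refine le_of_laplacian_lt (w := δ • hopfBarrier p b) hK (isOpen_Ioo.preimage continuous_norm)
    (preimage_mono Ioo_subset_Icc_self) hv
    (fun x hx => (hsmooth hx.1).continuousAt.continuousWithinAt) hv₂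
    (fun x hx => (hsmooth hx.1.le).contDiffWithinAt) ?_ ?_
  · rintro x ⟨hx, hxU⟩
    obtain hxa | hxa := hx.1.eq_or_lt'
    · exact hinner x hxa
    · have hxb : ‖x‖ = b := hx.2.eq_of_not_lt fun hxb => hxU ⟨hxa, hxb⟩
      simpa [hopfBarrier, hxb] using houter x hxb
  · intro x hx hlt
    have hpos : 0 < δ * hopfBarrier p b x := mul_pos hδ (hopfBarrier_pos hp₀ (hne hx.1.le) hx.2)
    rw [laplacian_smul _ (contDiffAt_hopfBarrier (hne hx.1.le))]
    calc
      Δ v x ≤ C * max (v x) 0 := hlap x hx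
      _ ≤ C * (δ * hopfBarrier p b x) := by
        gcongr
        exact max_le hlt.le hpos.le
      _ = δ * (C * hopfBarrier p b x) := by ring
      _ < δ * Δ (hopfBarrier p b : E → ℝ) x := by
        gcongr
        exact mul_hopfBarrier_lt_laplacian hC hp (hne hx.1.le) hx.2.le

theorem pos_of_laplacian_le_mul (ha : 0 < a) (hC : 0 ≤ C) {v : E → ℝ}
    (hv : ContinuousOn v (norm ⁻¹' Icc a b)) (hv₂ : ContDiffOn ℝ 2 v (norm ⁻¹' Ioo a b))
    (hlap : ∀ x, ‖x‖ ∈ Ioo a b → Δ v x ≤ C * max (v x) 0)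
    (hinner : ∀ x, ‖x‖ = a → 0 < v x) (houter : ∀ x, ‖x‖ = b → 0 ≤ v x) :
    ∀ x, ‖x‖ ∈ Ico a b → 0 < v x := by
  intro x hx
  have hab : a < b := hx.1.trans_lt hx.2
  obtain ⟨η, hη, hηv⟩ : ∃ η, 0 < η ∧ ∀ y ∈ sphere (0 : E) a, η ≤ v y :=
    (isCompact_sphere 0 a).exists_forall_le'
      (hv.mono fun y hy => by simp_all [hab.le]) fun y hy => hinner y (by simpa using hy)
  set p := C * b ^ 2 + finrank ℝ E + 1 with hp
  have hp₀ : 0 < p := by positivity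
  set m := a ^ (-p) - b ^ (-p)
  have hm : 0 < m := sub_pos.2 (rpow_lt_rpow_of_neg ha hab (neg_lt_zero.2 hp₀))
  have hle : η / m * hopfBarrier p b x ≤ v x := by
    refine smul_hopfBarrier_le ha hC hp.ge hv hv₂ hlap (div_pos hη hm) (fun y hy => ?_) houter x
      ⟨hx.1, hx.2.le⟩
    calc
      η / m * hopfBarrier p b y = η := by rw [hopfBarrier, hy, div_mul_cancel₀ _ hm.ne']
      _ ≤ v y := hηv y (by simpa using hy)
  have hβ := hopfBarrier_pos hp₀ (norm_pos_iff.1 (ha.trans_le hx.1)) hx.2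
  exact (mul_pos (div_pos hη hm) hβ).trans_le hle

end Annulus

section ExpDirichlet

variable {E : Type*} [NormedAddCommGroup E] [InnerProductSpace ℝ E] [FiniteDimensional ℝ E]

/-- A classical solution on the closed unit ball of the Dirichlet problem
`Δ u = c * (exp u - ‖x‖² * exp (-u))`, `u = 0` on the unit sphere, in any dimension. -/
structure IsExpDirichletSol (c : ℝ) (u : E → ℝ) : Prop where
  continuousOn : ContinuousOn u (closedBall 0 1)
  contDiffOn : ContDiffOn ℝ 2 u (ball 0 1)
  laplacian_eq : ∀ x ∈ ball (0 : E) 1, Δ u x = c * (exp (u x) - ‖x‖ ^ 2 * exp (-u x))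
  eq_zero : ∀ x ∈ sphere (0 : E) 1, u x = 0

theorem exp_sub_sq_mul_exp_neg_le {r s : ℝ} (hr : 0 < r) (hs : s ≤ 0) :
    exp s - r ^ 2 * exp (-s) ≤ 2 * max (s - log r) 0 := by
  have hfactor : exp s - r ^ 2 * exp (-s) = exp s * (1 - exp (2 * (log r - s))) := by
    have hr₂ : r ^ 2 = exp (2 * log r) := by rw [mul_comm, exp_mul, exp_log hr, rpow_two]
    rw [hr₂, mul_sub, mul_one, ← exp_add, ← exp_add]
    ring_nf
  have hlin : 1 - exp (2 * (log r - s)) ≤ 2 * max (s - log r) 0 := by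
    linarith [add_one_le_exp (2 * (log r - s)), le_max_left (s - log r) 0]
  calc
    exp s - r ^ 2 * exp (-s) = exp s * (1 - exp (2 * (log r - s))) := hfactor
    _ ≤ exp s * (2 * max (s - log r) 0) := by gcongr
    _ ≤ 2 * max (s - log r) 0 := mul_le_of_le_one_left (by positivity) (exp_le_one_iff.2 hs)

namespace IsExpDirichletSol

variable {c : ℝ} {u : E → ℝ} {x : E}

theorem nonpos (hu : IsExpDirichletSol c u) (hc : 0 < c) (hx : ‖x‖ ≤ 1) : u x ≤ 0 := by
  refine le_of_laplacian_lt (v := 0) (isCompact_closedBall 0 1) isOpen_ball ball_subset_closedBall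
    continuousOn_const hu.continuousOn contDiffOn_const hu.contDiffOn ?_ ?_ x (by simpa using hx)
  · intro y hy
    rw [closedBall_sdiff_ball] at hy
    exact (hu.eq_zero y hy).le
  · intro y hy hpos
    have hnorm : ‖y‖ ^ 2 < 1 := pow_lt_one₀ (norm_nonneg y) (by simpa using hy) two_ne_zero
    have hexp : exp (-u y) < exp (u y) := exp_lt_exp.2 (neg_lt_self hpos)
    have hsource : ‖y‖ ^ 2 * exp (-u y) < exp (u y) :=
      (mul_le_of_le_one_left (exp_pos _).le hnorm.le).trans_lt hexp
    rw [hu.laplacian_eq y hy, show (0 : E → ℝ) = fun _ => 0 from rfl, laplacian_const]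
    exact mul_pos hc (sub_pos.2 hsource)

theorem laplacian_sub_log_norm_le (hu : IsExpDirichletSol c u) (hc : 0 < c) (hE : 2 ≤ finrank ℝ E)
    (hx₀ : x ≠ 0) (hx₁ : ‖x‖ < 1) :
    Δ (fun y => u y - log ‖y‖) x ≤ 2 * c * max (u x - log ‖x‖) 0 := by
  have hball : x ∈ ball (0 : E) 1 := by simpa using hx₁
  have hlog : ContDiffAt ℝ 2 (fun y : E => log ‖y‖) x :=
    (contDiffAt_norm ℝ hx₀).log (norm_ne_zero_iff.2 hx₀)
  have hsubharmonic : 0 ≤ Δ (fun y : E => log ‖y‖) x := by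
    rw [laplacian_log_norm hx₀]
    exact div_nonneg (sub_nonneg.2 (by exact_mod_cast hE)) (by positivity)
  calc
    Δ (fun y => u y - log ‖y‖) x = Δ u x - Δ (fun y : E => log ‖y‖) x :=
      (hu.contDiffOn.contDiffAt (isOpen_ball.mem_nhds hball)).laplacian_sub hlog
    _ ≤ Δ u x := sub_le_self _ hsubharmonic
    _ = c * (exp (u x) - ‖x‖ ^ 2 * exp (-u x)) := hu.laplacian_eq x hball
    _ ≤ c * (2 * max (u x - log ‖x‖) 0) := by
      gcongr
      exact exp_sub_sq_mul_exp_neg_le (norm_pos_iff.2 hx₀) (hu.nonpos hc hx₁.le)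
    _ = 2 * c * max (u x - log ‖x‖) 0 := by ring

theorem log_norm_lt (hu : IsExpDirichletSol c u) (hc : 0 < c) (hE : 2 ≤ finrank ℝ E)
    (hx₀ : x ≠ 0) (hx₁ : ‖x‖ < 1) : log ‖x‖ < u x := by
  obtain ⟨m, hm⟩ : BddBelow (u '' closedBall 0 1) :=
    (isCompact_closedBall 0 1).bddBelow_image hu.continuousOn
  set ρ := min ‖x‖ (exp (m - 1))
  have hρ : 0 < ρ := lt_min (norm_pos_iff.2 hx₀) (exp_pos _)
  have hne {y : E} (hy : ρ ≤ ‖y‖) : y ≠ 0 := norm_pos_iff.1 (hρ.trans_le hy)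
  have hlog {y : E} (hy : ρ ≤ ‖y‖) : ContDiffAt ℝ 2 (fun z : E => log ‖z‖) y :=
    (contDiffAt_norm ℝ (hne hy)).log (norm_ne_zero_iff.2 (hne hy))
  refine sub_pos.1 <| pos_of_laplacian_le_mul (v := fun y => u y - log ‖y‖) (b := 1) hρ
    (by positivity : 0 ≤ 2 * c) ?_ ?_
    (fun y hy => hu.laplacian_sub_log_norm_le hc hE (hne hy.1.le) hy.2) ?_ ?_
    x ⟨min_le_left _ _, hx₁⟩
  · exact (hu.continuousOn.mono fun y hy => by simpa using hy.2).sub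
      fun y hy => (hlog hy.1).continuousAt.continuousWithinAt
  · exact (hu.contDiffOn.mono fun y hy => by simpa using hy.2).sub
      fun y hy => (hlog hy.1.le).contDiffWithinAt
  · intro y hy
    have hlogρ : log ρ ≤ m - 1 := (log_le_iff_le_exp hρ).2 (min_le_right _ _)
    have hmu : m ≤ u y :=
      hm ⟨y, by simpa only [mem_closedBall_zero_iff, hy] using (min_le_left _ _).trans hx₁.le, rfl⟩
    rw [hy]
    linarith
  · intro y hy
    simp [hu.eq_zero y (by simpa using hy), hy]

end IsExpDirichletSol

theorem stmt_9_general (hE : 2 ≤ finrank ℝ E) {c : ℝ} (hc : 0 < c) {u : E → ℝ}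
    (hu : IsExpDirichletSol c u) {x : E} (hx₀ : x ≠ 0) (hx₁ : ‖x‖ < 1) :
    (0 < c * (exp (u x) - ‖x‖ ^ 2 * exp (-u x)) ∧
      c * (exp (u x) - ‖x‖ ^ 2 * exp (-u x)) < c) ∧
    (0 < c * (exp (u x) + ‖x‖ ^ 2 * exp (-u x)) ∧
      c * (exp (u x) + ‖x‖ ^ 2 * exp (-u x)) < 2 * c) ∧
    (-(2 * c) < -(2 * ‖x‖ * c * exp (-u x)) ∧ -(2 * ‖x‖ * c * exp (-u x)) < 0) := by
  have hr : 0 < ‖x‖ := norm_pos_iff.2 hx₀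
  have hlower : ‖x‖ < exp (u x) := (log_lt_iff_lt_exp hr).1 (hu.log_norm_lt hc hE hx₀ hx₁)
  have hupper : exp (u x) ≤ 1 := exp_le_one_iff.2 (hu.nonpos hc hx₁.le)
  have hmul : ‖x‖ * exp (-u x) < 1 := by
    rwa [exp_neg, ← div_eq_mul_inv, div_lt_one (exp_pos _)]
  have hsq : ‖x‖ ^ 2 * exp (-u x) < ‖x‖ := by
    rw [sq, mul_assoc]
    exact mul_lt_of_lt_one_right hr hmul
  have hsq_pos : 0 < ‖x‖ ^ 2 * exp (-u x) := by positivity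
  refine ⟨⟨mul_pos hc (by linarith), mul_lt_of_lt_one_right hc (by linarith)⟩,
    ⟨by positivity, ?_⟩, ⟨?_, ?_⟩⟩
  · rw [mul_comm 2 c]
    gcongr
    linarith
  · rw [neg_lt_neg_iff, mul_right_comm, mul_assoc 2, mul_right_comm]
    exact mul_lt_of_lt_one_right (by positivity) (by simpa using hmul)
  · rw [neg_lt_zero]
    positivity

end ExpDirichlet

theorem laplacian2_eq_laplacian {u : EuclideanSpace ℝ (Fin 2) → ℝ} {x : EuclideanSpace ℝ (Fin 2)}
    (hu : ContDiffAt ℝ 2 u x) : laplacian2 u x = Δ u x := by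
  have hdiff : DifferentiableAt ℝ (fderiv ℝ u) x :=
    (hu.fderiv_right (m := 1) (by norm_num)).differentiableAt one_ne_zero
  rw [laplacian_eq_iteratedFDeriv_orthonormalBasis u (EuclideanSpace.basisFun (Fin 2) ℝ)]
  refine Finset.sum_congr rfl fun i _ => ?_
  rw [iteratedFDeriv_two_apply, fderiv_clm_apply hdiff (differentiableAt_const _)]
  simp

theorem IsDirichletSol.isExpDirichletSol {ε : ℝ} {u : EuclideanSpace ℝ (Fin 2) → ℝ}
    (hu : IsDirichletSol ε u) : IsExpDirichletSol (ε ^ 2)⁻¹ u := by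
  obtain ⟨hcont, hsmooth, heq, hzero⟩ := hu
  have hsmooth₂ : ContDiffOn ℝ 2 u (ball 0 1) := hsmooth.of_le (WithTop.coe_le_coe.2 le_top)
  refine ⟨hcont, hsmooth₂, fun x hx => ?_, hzero⟩
  rw [← laplacian2_eq_laplacian (hsmooth₂.contDiffAt (isOpen_ball.mem_nhds hx)), heq x hx]

/-- with `F(s,r) = ε⁻²·(exp s − r²·exp(−s))`,
`F₁(s,r) = ε⁻²·(exp s + r²·exp(−s))` and `F₂(s,r) = −2r·ε⁻²·exp(−s)`, the unique radially
symmetric solution `ū_ε` (with radial profile `g`) satisfies, for all `0 < r < 1`: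
`0 < F(ū_ε(r),r) < ε⁻²`, `0 < F₁(ū_ε(r),r) < 2ε⁻²`, and `−2ε⁻² < F₂(ū_ε(r),r) < 0`. -/
theorem stmt_9 (ε : ℝ) (hε : 0 < ε) (u : EuclideanSpace ℝ (Fin 2) → ℝ) (g : ℝ → ℝ)
    (hu : IsDirichletSol ε u)
    (hrad : ∀ x ∈ closedBall (0 : EuclideanSpace ℝ (Fin 2)) 1, u x = g ‖x‖) :
    ∀ r ∈ Ioo (0 : ℝ) 1,
      (0 < (ε ^ 2)⁻¹ * (Real.exp (g r) - r ^ 2 * Real.exp (-g r)) ∧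
        (ε ^ 2)⁻¹ * (Real.exp (g r) - r ^ 2 * Real.exp (-g r)) < (ε ^ 2)⁻¹) ∧
      (0 < (ε ^ 2)⁻¹ * (Real.exp (g r) + r ^ 2 * Real.exp (-g r)) ∧
        (ε ^ 2)⁻¹ * (Real.exp (g r) + r ^ 2 * Real.exp (-g r)) < 2 * (ε ^ 2)⁻¹) ∧
      (-(2 * (ε ^ 2)⁻¹) < -(2 * r * (ε ^ 2)⁻¹ * Real.exp (-g r)) ∧
        -(2 * r * (ε ^ 2)⁻¹ * Real.exp (-g r)) < 0) := by
  intro r hr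
  obtain ⟨x, rfl⟩ := exists_norm_eq (EuclideanSpace ℝ (Fin 2)) hr.1.le
  rw [← hrad x (by simpa using hr.2.le)]
  exact stmt_9_general (by simp) (by positivity) hu.isExpDirichletSol (norm_pos_iff.1 hr.1) hr.2
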